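/- arXiv:2002.12013 — 5 statements merged into one kernel-verified Lean document; each statement's English description precedes it below -/
import Mathlib

section
/- Let u, m, N be integers with m > 0, N > 0 and gcd(u, m) = 1. Let p_1,…,p_s be the distinct primes that divide N but do not divide m. If c is a positive real number such that (cN/m)·(1 − 1/p_1)⋯(1 − 1/p_s) ≥ 2^s, then for every real number a there is an integer k such that a ≤ k < a + cN, k ≡ u (mod m), and gcd(k, N) = 1. -/
/-!
The proof is Legendre's sieve with the trivial error bound. For a modulus `r`, the number of
integers in `[a, a + L)` congruent to `v` modulo `r` is within `1` (strictly) of `L / r`.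
Removing the multiples of a prime `p ∤ r` subtracts the count for a single residue class modulo
`r * p`, by the Chinese remainder theorem; this multiplies the main term by `1 - 1 / p` and at most
doubles the error. Hence, after sieving by `s` primes, the count differs from
`(L / r) ∏ (1 - 1 / p)` by strictly less than `2 ^ s` (`abs_card_sifted_sub_lt`), so under
the hypothesis it is positive. An element of the sifted set is coprime to `N`: a prime
dividing both it and `N` must divide `m`, hence also `u`, contradicting `gcd(u, m) = 1`.
-/

/-- The integers in `[a, a + L)` that are congruent to `v` modulo `r` and divisible by no element
of `S`. -/
noncomputable def sifted (a L : ℝ) (S : Finset ℕ) (r v : ℤ) : Finset ℤ :=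
  (Finset.Ico ⌈a⌉ ⌈a + L⌉).filter fun k => k ≡ v [ZMOD r] ∧ ∀ p ∈ S, ¬ (p : ℤ) ∣ k

lemma mem_sifted {a L : ℝ} {S : Finset ℕ} {r v k : ℤ} :
    k ∈ sifted a L S r v ↔
      (a ≤ k ∧ (k : ℝ) < a + L) ∧ k ≡ v [ZMOD r] ∧ ∀ p ∈ S, ¬ (p : ℤ) ∣ k := by
  simp only [sifted, Finset.mem_filter, Finset.mem_Ico, Int.ceil_le, Int.lt_ceil]

lemma abs_card_sifted_empty_sub_lt (a L : ℝ) (hL : 0 < L) (r v : ℤ) (hr : 0 < r) :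
    |((sifted a L ∅ r v).card : ℝ) - L / r| < 1 := by
  have hr' : (0 : ℝ) < r := by exact_mod_cast hr
  have himage : sifted a L ∅ r v =
      (Finset.Ico ⌈(a - v) / r⌉ ⌈(a + L - v) / r⌉).image fun t => v + r * t := by
    ext k
    simp only [mem_sifted, Finset.mem_image, Finset.mem_Ico, Int.ceil_le, Int.lt_ceil,
      div_le_iff₀ hr', lt_div_iff₀ hr']
    constructor
    · rintro ⟨⟨h1, h2⟩, h3, -⟩
      obtain ⟨t, ht⟩ := h3.symm.dvd
      have hk : k = v + r * t := by linarith
      have hk' : (k : ℝ) = v + r * t := by exact_mod_cast hk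
      exact ⟨t, ⟨by linarith, by linarith⟩, hk.symm⟩
    · rintro ⟨t, ⟨h1, h2⟩, rfl⟩
      refine ⟨⟨by push_cast; linarith, by push_cast; linarith⟩, ?_, by simp⟩
      exact (Int.modEq_iff_dvd.2 ⟨t, by ring⟩ : v ≡ v + r * t [ZMOD r]).symm
  have hinj : Function.Injective fun t : ℤ => v + r * t := by
    intro x y hxy
    simpa [hr.ne'] using hxy
  have hsplit : (a + L - v) / r = (a - v) / r + L / r := by ring
  have hpos : 0 < L / r := by positivity
  have hle : ⌈(a - v) / r⌉ ≤ ⌈(a + L - v) / r⌉ := Int.ceil_mono (by linarith)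
  have hcard : ((sifted a L ∅ r v).card : ℝ) =
      (⌈(a + L - v) / r⌉ : ℝ) - (⌈(a - v) / r⌉ : ℝ) := by
    rw [himage, Finset.card_image_of_injective _ hinj, Int.card_Ico]
    have hnat := Int.toNat_of_nonneg (sub_nonneg.2 hle)
    exact_mod_cast hnat
  have h1 := Int.le_ceil ((a - v) / (r : ℝ))
  have h2 := Int.ceil_lt_add_one ((a - v) / (r : ℝ))
  have h3 := Int.le_ceil ((a + L - v) / (r : ℝ))
  have h4 := Int.ceil_lt_add_one ((a + L - v) / (r : ℝ))
  rw [hcard, abs_lt]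
  constructor <;> linarith

/-- Sieving by one more prime `p` removes a sifted set for a single residue class modulo
`r * p`. -/
lemma exists_card_sifted_insert (a L : ℝ) (S : Finset ℕ) (r v : ℤ) (p : ℕ)
    (hpr : IsCoprime r p) :
    ∃ w : ℤ, (sifted a L (insert p S) r v).card + (sifted a L S (r * p) w).card =
      (sifted a L S r v).card := by
  obtain ⟨x, y, hxy⟩ := hpr
  -- the residue class that is `v` modulo `r` and `0` modulo `p`
  refine ⟨v * (y * p), ?_⟩
  have hclass : ∀ k : ℤ,
      k ≡ v * (y * p) [ZMOD r * p] ↔ k ≡ v [ZMOD r] ∧ (p : ℤ) ∣ k := by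
    intro k
    have hv : v * (y * p) ≡ v [ZMOD r] :=
      Int.modEq_iff_dvd.2 ⟨v * x, by linear_combination -v * hxy⟩
    have h0 : v * (y * p) ≡ 0 [ZMOD p] :=
      Int.modEq_zero_iff_dvd.2 ⟨v * y, by ring⟩
    have hcop : r.natAbs.Coprime (p : ℤ).natAbs :=
      Int.isCoprime_iff_gcd_eq_one.1 ⟨x, y, hxy⟩
    rw [← Int.modEq_and_modEq_iff_modEq_mul hcop, ← Int.modEq_zero_iff_dvd]
    exact ⟨fun h => ⟨h.1.trans hv, h.2.trans h0⟩,
      fun h => ⟨h.1.trans hv.symm, h.2.trans h0.symm⟩⟩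
  have h1 : sifted a L (insert p S) r v =
      (sifted a L S r v).filter fun k => ¬ (p : ℤ) ∣ k := by
    ext k
    simp only [mem_sifted, Finset.mem_filter, Finset.forall_mem_insert]
    tauto
  have h2 : sifted a L S (r * p) (v * (y * p)) =
      (sifted a L S r v).filter fun k => (p : ℤ) ∣ k := by
    ext k
    simp only [mem_sifted, Finset.mem_filter, hclass]
    tauto
  rw [h1, h2, add_comm]
  exact Finset.card_filter_add_card_filter_not _

/-- Legendre's sieve with the trivial error bound. -/
lemma abs_card_sifted_sub_lt (a L : ℝ) (hL : 0 < L) (S : Finset ℕ) :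
    (∀ p ∈ S, p.Prime) → ∀ r v : ℤ, 0 < r → (∀ p ∈ S, ¬ (p : ℤ) ∣ r) →
      |((sifted a L S r v).card : ℝ) - L / r * ∏ p ∈ S, (1 - 1 / (p : ℝ))| <
        2 ^ S.card := by
  induction S using Finset.induction_on with
  | empty =>
    intro _ r v hr _
    simpa using abs_card_sifted_empty_sub_lt a L hL r v hr
  | insert p S hpS ih =>
    intro hprime r v hr hdvd
    rw [Finset.forall_mem_insert] at hprime hdvd
    obtain ⟨hp, hS⟩ := hprime
    obtain ⟨hpr, hSr⟩ := hdvd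
    have hcop : IsCoprime r (p : ℤ) :=
      ((Nat.prime_iff_prime_int.1 hp).irreducible.coprime_iff_not_dvd.2 hpr).symm
    obtain ⟨w, hw⟩ := exists_card_sifted_insert a L S r v p hcop
    have hSrp : ∀ q ∈ S, ¬ (q : ℤ) ∣ r * p := by
      intro q hq hqd
      rcases (Nat.prime_iff_prime_int.1 (hS q hq)).dvd_or_dvd hqd with h | h
      · exact hSr q hq h
      · rw [Int.natCast_dvd_natCast, Nat.prime_dvd_prime_iff_eq (hS q hq) hp] at h
        exact hpS (h ▸ hq)
    have hA := ih hS r v hr hSr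
    have hB := ih hS (r * p) w (mul_pos hr (by exact_mod_cast hp.pos)) hSrp
    have hw' : ((sifted a L (insert p S) r v).card : ℝ) + (sifted a L S (r * p) w).card =
        (sifted a L S r v).card := by exact_mod_cast hw
    have hmain : L / r * ((1 - 1 / (p : ℝ)) * ∏ q ∈ S, (1 - 1 / (q : ℝ))) =
        L / r * ∏ q ∈ S, (1 - 1 / (q : ℝ)) -
          L / ((r * p : ℤ) : ℝ) * ∏ q ∈ S, (1 - 1 / (q : ℝ)) := by
      push_cast
      rw [← div_div]
      ring
    rw [Finset.prod_insert hpS, Finset.card_insert_of_notMem hpS, hmain, pow_succ]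
    rw [abs_lt] at hA hB ⊢
    constructor <;> linarith [hA.1, hA.2, hB.1, hB.2]

open Real

/-- Let `u, m, N` be integers with `m, N > 0` and `gcd(u, m) = 1`, and let
`p_1, …, p_s` be the primes dividing `N` but not `m`. If `c > 0` and
`(cN/m)(1 - 1/p_1)⋯(1 - 1/p_s) ≥ 2^s`, then for every real `a` there is an integer `k`
with `a ≤ k < a + cN`, `k ≡ u (mod m)` and `gcd(k, N) = 1`. -/
theorem statement13 (u m N : ℤ) (hm : 0 < m) (hN : 0 < N) (hum : Int.gcd u m = 1)
    (c : ℝ) (hc : 0 < c)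
    (h : (2 : ℝ) ^ ((N.natAbs.primeFactors.filter fun p => ¬ p ∣ m.natAbs).card) ≤
      c * (N : ℝ) / (m : ℝ) *
        ∏ p ∈ N.natAbs.primeFactors.filter (fun p => ¬ p ∣ m.natAbs), (1 - 1 / (p : ℝ))) :
    ∀ a : ℝ, ∃ k : ℤ, a ≤ (k : ℝ) ∧ (k : ℝ) < a + c * (N : ℝ) ∧
      k ≡ u [ZMOD m] ∧ Int.gcd k N = 1 := by
  intro a
  have hN' : (0 : ℝ) < N := by exact_mod_cast hN
  set S := N.natAbs.primeFactors.filter fun p => ¬ p ∣ m.natAbs with hSdef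
  have hprime : ∀ p ∈ S, p.Prime := fun p hp =>
    Nat.prime_of_mem_primeFactors (Finset.mem_filter.1 hp).1
  have hdvd : ∀ p ∈ S, ¬ (p : ℤ) ∣ m := fun p hp hpm =>
    (Finset.mem_filter.1 hp).2 (Int.natCast_dvd.1 hpm)
  have hcount := (abs_lt.1
    (abs_card_sifted_sub_lt a (c * N) (mul_pos hc hN') S hprime m u hm hdvd)).1
  have hpos : (0 : ℝ) < (sifted a (c * N) S m u).card := by linarith
  obtain ⟨k, hk⟩ := Finset.card_pos.1 (by exact_mod_cast hpos)
  obtain ⟨⟨hak, hka⟩, hku, hkS⟩ := mem_sifted.1 hk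
  refine ⟨k, hak, hka, hku, ?_⟩
  by_contra hgcd
  obtain ⟨p, hp, hpd⟩ := Nat.exists_prime_and_dvd hgcd
  have hpd' : (p : ℤ) ∣ (Int.gcd k N : ℤ) := Int.natCast_dvd_natCast.2 hpd
  have hpk : (p : ℤ) ∣ k := hpd'.trans (Int.gcd_dvd_left ..)
  have hpN : (p : ℤ) ∣ N := hpd'.trans (Int.gcd_dvd_right ..)
  by_cases hpm : (p : ℤ) ∣ m
  · have hpu : (p : ℤ) ∣ u := (hku.of_dvd hpm).dvd_iff.1 hpk
    have hp1 : (p : ℤ) ∣ (Int.gcd u m : ℤ) := Int.dvd_coe_gcd hpu hpm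
    rw [hum] at hp1
    exact hp.one_lt.ne' (Nat.dvd_one.1 (Int.natCast_dvd_natCast.1 hp1))
  · refine hkS p ?_ hpk
    rw [hSdef, Finset.mem_filter, Nat.mem_primeFactors]
    exact ⟨⟨hp, Int.natCast_dvd.1 hpN, by omega⟩, fun h => hpm (Int.natCast_dvd.2 h)⟩
end

section
/- Let N > 5 be an integer and let a, b, c, n be positive integers with a + b + c = n and a/n = (N−2)/N. Suppose that for every integer k with gcd(k, nN) = 1 and {k/N} < 1/2 one has {ka/n} + {kb/n} + {kc/n} = 1. Then b/n = c/n = 1/N. -/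
/-!
Write `b/n = 1/N + t` and `c/n = 1/N - t`, so that `|t| < 1/N`. For `k ≡ r (mod N)` with
`0 < r < N/2` the fractional part of `ka/n` is `1 - 2r/N`, and the hypothesis becomes
`{kb/n} + {kc/n} = 2r/N`, which puts `kt` within `r/N` of an integer
(`exists_abs_sub_le_of_fract`). It remains to see that this forces `t = 0`; only `r = 1` and
`r = 2` are needed.

Write `t = T/(eN)` with `T` and `e` coprime. By lifting units modulo `eN` to units modulo `nN`
(`exists_lift_isCoprime`), every `k` coprime to `eN` may be used. Suppose a prime `p` divides
`e`. For `k = 1 + (e/p)Ns`, still `≡ 1 (mod N)`, the number `kt - t = sT/p` would be within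
`2/N ≤ 1/3` of an integer, strictly. As `s` is free modulo `p`, it can be chosen to make `sT/p`
further than that from the integers; for odd `p`, one of the signs `±s` keeps `k` prime to `p`
(`not_odd_prime_dvd`), and for `p = 2` the choice `s = 1` works when `4 ∣ eN`
(`not_four_dvd`). What is left is `e = 1`, where `|T| < e` gives `T = 0`, and `e = 2` with `N`
odd, where `t = ±1/(2N)` is excluded by `k = N + 2` because `N > 6`.
-/

/-- Units modulo a divisor `l` of `M` lift to units modulo `M`. -/
lemma exists_lift_isCoprime {l M : ℕ} (hM : M ≠ 0) (hl : l ∣ M) {k : ℤ}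
    (hk : IsCoprime k (l : ℤ)) : ∃ q : ℤ, IsCoprime (k + l * q) (M : ℤ) := by
  have : NeZero M := ⟨hM⟩
  have hu : IsUnit ((k : ℤ) : ZMod l) := (ZMod.coe_int_isUnit_iff_isCoprime k l).2 hk.symm
  obtain ⟨v, hv⟩ := ZMod.unitsMap_surjective hl hu.unit
  have hv' : (((v : ZMod M).val : ℤ) : ZMod l) = ((k : ℤ) : ZMod l) := by
    have := congrArg Units.val hv
    rw [ZMod.unitsMap_def, Units.coe_map, IsUnit.unit_spec] at this
    simpa [ZMod.natCast_val] using this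
  obtain ⟨q, hq⟩ := (ZMod.intCast_eq_intCast_iff_dvd_sub _ _ _).1 hv'.symm
  refine ⟨q, ?_⟩
  rw [← hq, add_sub_cancel]
  refine ((ZMod.coe_int_isUnit_iff_isCoprime _ M).1 ?_).symm
  have : (((v : ZMod M).val : ℤ) : ZMod M) = v := by simp
  rw [this]
  exact v.isUnit

/-- With `t = T/(pfN)` and `k = 1 + Nfs`, one has `kt - t = sT/p`. So if `|t| < 1/N` and `kt` is
within `1/N` of an integer, then `sT/p` is strictly within `2/N` of an integer. -/
lemma exists_small_shift {N f p T s : ℤ} (hf : 0 < f) (hT : |T| < p * f)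
    (h : ∃ m : ℤ, |(1 + N * f * s) * T - m * (p * f * N)| ≤ p * f) :
    ∃ m : ℤ, |N * (s * T - m * p)| < 2 * p := by
  obtain ⟨m, hm⟩ := h
  refine ⟨m, ?_⟩
  have h1 : |f * (N * (s * T - m * p))| < f * (2 * p) := by
    have e : f * (N * (s * T - m * p)) = ((1 + N * f * s) * T - m * (p * f * N)) - T := by ring
    rw [e]
    have := abs_sub ((1 + N * f * s) * T - m * (p * f * N)) T
    linarith
  rw [abs_mul, abs_of_pos hf] at h1
  exact lt_of_mul_lt_mul_left h1 hf.le

lemma isCoprime_one_add {p f N s : ℤ} (hp : IsCoprime (1 + N * f * s) p) :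
    IsCoprime (1 + N * f * s) (p * f * N) := by
  refine (hp.mul_right ?_).mul_right ?_
  · exact ⟨1, -(N * s), by ring⟩
  · exact ⟨1, -(f * s), by ring⟩

/-- The hypothesis `h` says that `kT/(eN)` is within `1/N` of an integer for every `k` prime to
`eN` with `k ≡ 1` modulo `N`. -/
lemma not_odd_prime_dvd {N e T : ℤ} (hN : 5 < N) (he : 0 < e) (hT : |T| < e)
    (hco : IsCoprime T e)
    (h : ∀ k : ℤ, IsCoprime k (e * N) → N ∣ k - 1 → ∃ m : ℤ, |k * T - m * (e * N)| ≤ e)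
    {p : ℕ} (hp : p.Prime) (hp2 : p ≠ 2) : ¬ (p : ℤ) ∣ e := by
  rintro ⟨f, rfl⟩
  have hp0 : (0 : ℤ) < p := by exact_mod_cast hp.pos
  have hf : 0 < f := pos_of_mul_pos_right he hp0.le
  have hpI : Prime (p : ℤ) := Nat.prime_iff_prime_int.1 hp
  obtain ⟨x, y, hxy⟩ : IsCoprime T (p : ℤ) := hco.of_mul_right_left
  obtain ⟨w, hw⟩ := hp.odd_of_ne_two hp2
  have hpw : (p : ℤ) = 2 * w + 1 := by exact_mod_cast hw
  have hw1 : (1 : ℤ) ≤ w := by have := hp.two_le; omega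
  -- The residues `w` and `-w` are the farthest from `0` modulo `p = 2w + 1`.
  have key : ∀ s z : ℤ, (s * T = w - z * p ∨ s * T = -w - z * p) →
      ¬ IsCoprime (1 + N * f * s) (p : ℤ) := by
    intro s z hs hc
    obtain ⟨m, hm⟩ := exists_small_shift hf hT
      (h _ (isCoprime_one_add hc) ⟨f * s, by ring⟩)
    have hbig : (w : ℤ) ≤ |s * T - m * p| := by
      rw [hpw] at hs ⊢
      rw [le_abs]
      rcases hs with hs | hs <;> rw [hs]
      · rcases le_or_gt 1 (z + m) with h1 | h1
        · right; nlinarith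
        · left; nlinarith
      · rcases le_or_gt 0 (z + m) with h1 | h1
        · right; nlinarith
        · left; nlinarith
    rw [abs_mul, abs_of_pos (by omega : (0 : ℤ) < N)] at hm
    nlinarith
  have h1 := key (w * x) (w * y) (Or.inl (by linear_combination w * hxy))
  have h2 := key (-(w * x)) (-(w * y)) (Or.inr (by linear_combination -w * hxy))
  have d1 : (p : ℤ) ∣ 1 + N * f * (w * x) := by
    by_contra hd
    exact h1 ((hpI.coprime_iff_not_dvd.2 hd).symm)
  have d2 : (p : ℤ) ∣ 1 + N * f * (-(w * x)) := by
    by_contra hd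
    exact h2 ((hpI.coprime_iff_not_dvd.2 hd).symm)
  have d3 : (p : ℤ) ∣ 2 := by
    have := dvd_add d1 d2
    ring_nf at this
    exact this
  have := Int.le_of_dvd (by norm_num) d3
  omega

/-- For `e = 2f`, the product `eN` is not divisible by `4`: otherwise `k = 1 + eN/2` is prime to
`eN`, and it moves `t` by `1/2` modulo `1`. -/
lemma not_four_dvd {N f T : ℤ} (hN : 5 < N) (hf : 0 < f) (hT : |T| < 2 * f)
    (hco : IsCoprime T (2 * f))
    (h : ∀ k : ℤ, IsCoprime k (2 * f * N) → N ∣ k - 1 →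
      ∃ m : ℤ, |k * T - m * (2 * f * N)| ≤ 2 * f) : ¬ 2 ∣ N * f := by
  rintro ⟨v, hv⟩
  have hc : IsCoprime (1 + N * f * 1) (2 : ℤ) := ⟨1, -v, by rw [hv]; ring⟩
  obtain ⟨m, hm⟩ := exists_small_shift hf hT
    (h _ (isCoprime_one_add hc) ⟨f * 1, by ring⟩)
  obtain ⟨x, y, hxy⟩ : IsCoprime T 2 := hco.of_mul_right_left
  have hne : 1 * T - m * 2 ≠ 0 := by
    intro h0
    have : T = 2 * m := by linarith
    rw [this] at hxy
    have : 2 * (x * m + y) = 1 := by linear_combination hxy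
    omega
  have := Int.one_le_abs hne
  rw [abs_mul, abs_of_pos (by omega : (0 : ℤ) < N)] at hm
  nlinarith

/-- The arithmetic core: if `t = T/(eN)` with `T` prime to `e` and `|t| < 1/N`, and if `kt` is
within `r/N` of an integer whenever `k` is prime to `eN` and `k ≡ r` modulo `N`, for `r = 1, 2`,
then `t = 0`. -/
lemma eq_zero_of_coprime {N e T : ℤ} (hN : 5 < N) (he : 0 < e) (hT : |T| < e)
    (hco : IsCoprime T e)
    (h1 : ∀ k : ℤ, IsCoprime k (e * N) → N ∣ k - 1 → ∃ m : ℤ, |k * T - m * (e * N)| ≤ e)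
    (h2 : ∀ k : ℤ, IsCoprime k (e * N) → N ∣ k - 2 →
      ∃ m : ℤ, |k * T - m * (e * N)| ≤ 2 * e) : T = 0 := by
  have hodd := fun (p : ℕ) (hp : p.Prime) (hp2 : p ≠ 2) =>
    not_odd_prime_dvd hN he hT hco h1 hp hp2
  by_cases hev : (2 : ℤ) ∣ e
  · exfalso
    obtain ⟨f, rfl⟩ := hev
    have hf : 0 < f := by omega
    have h4 := not_four_dvd hN hf hT hco h1
    have hf1 : f = 1 := by
      by_contra hne
      obtain ⟨p, hp, hpd⟩ := Nat.exists_prime_and_dvd (n := f.natAbs) (by omega)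
      have hpf : (p : ℤ) ∣ f := Int.natCast_dvd.2 hpd
      by_cases hp2 : p = 2
      · subst hp2
        exact h4 (Dvd.dvd.mul_left (by exact_mod_cast hpf) N)
      · exact hodd p hp hp2 (hpf.mul_left 2)
    subst hf1
    obtain ⟨g, hg⟩ : ∃ g, N = 2 * g + 1 := ⟨N / 2, by omega⟩
    have hN6 : 6 < N := by omega
    obtain ⟨x, y, hxy⟩ := hco
    have hT0 : T ≠ 0 := by
      rintro rfl
      omega
    have hc : IsCoprime (N + 2) (2 * 1 * N) := by
      have c2 : IsCoprime (N + 2) (2 * 1) := ⟨1, -(g + 1), by rw [hg]; ring⟩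
      have cN : IsCoprime (N + 2) N := ⟨-g, g + 1, by rw [hg]; ring⟩
      exact c2.mul_right cN
    -- Now `t = ±1/(2N)`, and `(N + 2)/(2N)` is at distance `(N - 2)/(2N) > 2/N` from the integers.
    obtain ⟨m, hm⟩ := h2 _ hc ⟨1, by ring⟩
    rw [abs_lt] at hT
    rw [abs_le] at hm
    have hT1 : T = 1 ∨ T = -1 := by omega
    rcases hT1 with rfl | rfl
    · rcases le_or_gt m 0 with h0 | h0
      · nlinarith
      · nlinarith
    · rcases le_or_gt 0 m with h0 | h0
      · nlinarith
      · nlinarith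
  · have he1 : e = 1 := by
      by_contra hne
      obtain ⟨p, hp, hpd⟩ := Nat.exists_prime_and_dvd (n := e.natAbs) (by omega)
      have hpe : (p : ℤ) ∣ e := Int.natCast_dvd.2 hpd
      by_cases hp2 : p = 2
      · subst hp2
        exact hev (by exact_mod_cast hpe)
      · exact hodd p hp hp2 hpe
    rw [abs_lt] at hT
    omega

/-- The condition on fractional parts says that `k (b/n - 1/N)` is within `r/N` of an integer
when `k ≡ r` modulo `N`; both sides are multiplied by `nN`. -/
lemma exists_abs_sub_le_of_fract {N a b c n : ℕ} (hN : 0 < N) (hn : 0 < n)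
    (han : (a : ℝ) / n = ((N : ℝ) - 2) / N) {k r : ℤ} (hr : 0 < r) (hrN : 2 * r < N)
    (hk : (N : ℤ) ∣ k - r)
    (h : Int.fract ((k : ℝ) / N) < 1 / 2 →
      Int.fract ((k : ℝ) * a / n) + Int.fract ((k : ℝ) * b / n)
        + Int.fract ((k : ℝ) * c / n) = 1) :
    ∃ m : ℤ, |k * (b * N - n) - m * (n * N)| ≤ r * n := by
  obtain ⟨q, hq⟩ := hk
  have hN' : (0 : ℝ) < N := by exact_mod_cast hN
  have hn' : (0 : ℝ) < n := by exact_mod_cast hn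
  have hr' : (0 : ℝ) < r := by exact_mod_cast hr
  have hrN' : 2 * (r : ℝ) < N := by exact_mod_cast hrN
  have hkr : (k : ℝ) = r + N * q := by
    have : k = r + N * q := by linarith
    exact_mod_cast this
  have f1 : Int.fract ((k : ℝ) / N) = r / N := by
    rw [Int.fract_eq_iff]
    refine ⟨by positivity, by rw [div_lt_one hN']; linarith, q, ?_⟩
    rw [hkr]
    field_simp
    ring
  have f2 : Int.fract ((k : ℝ) * a / n) = 1 - 2 * r / N := by
    rw [Int.fract_eq_iff]
    have hlt : 2 * (r : ℝ) / N < 1 := by rw [div_lt_one hN']; linarith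
    have hpos : 0 < 2 * (r : ℝ) / N := by positivity
    refine ⟨by linarith, by linarith, k - 2 * q - 1, ?_⟩
    rw [mul_div_assoc, han]
    push_cast
    rw [hkr]
    field_simp
    ring
  have h' := h (by rw [f1, div_lt_div_iff₀ hN' (by norm_num)]; linarith)
  rw [f2] at h'
  have hb0 := Int.fract_nonneg ((k : ℝ) * b / n)
  have hc0 := Int.fract_nonneg ((k : ℝ) * c / n)
  have hb1 : Int.fract ((k : ℝ) * b / n) ≤ 2 * r / N := by linarith
  set m := ⌊(k : ℝ) * b / n⌋ with hm
  have hfl : Int.fract ((k : ℝ) * b / n) = (k * b - m * n) / n := by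
    rw [Int.fract, ← hm]
    field_simp
  rw [hfl] at hb0 hb1
  rw [div_le_div_iff₀ hn' hN'] at hb1
  have hb0' : (0 : ℝ) ≤ k * b - m * n := by
    by_contra hneg
    exact absurd hb0 (not_le.2 (div_neg_of_neg_of_pos (not_le.1 hneg) hn'))
  have i0 : (0 : ℤ) ≤ k * b - m * n := by exact_mod_cast hb0'
  have i1 : (k * b - m * n) * (N : ℤ) ≤ 2 * r * n := by exact_mod_cast hb1
  have i2 : (0 : ℤ) ≤ (k * b - m * n) * (N : ℤ) := mul_nonneg i0 (by positivity)
  refine ⟨m - q, ?_⟩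
  have e : k * (b * N - n) - (m - q) * ((n : ℤ) * N) = (k * b - m * n) * (N : ℤ) - r * n := by
    linear_combination (-(n : ℤ)) * hq
  rw [e, abs_le]
  constructor <;> linarith

/-- Let `N > 5` and let `a, b, c, n` be positive integers with `a + b + c = n` and
`a/n = (N-2)/N`. If `{ka/n} + {kb/n} + {kc/n} = 1` for every integer `k` with
`gcd(k, nN) = 1` and `{k/N} < 1/2`, then `b/n = c/n = 1/N`. -/
theorem statement15 (N a b c n : ℕ) (hN : 5 < N)
    (ha : 0 < a) (hb : 0 < b) (hc : 0 < c) (habc : a + b + c = n)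
    (han : (a : ℝ) / n = ((N : ℝ) - 2) / N)
    (h : ∀ k : ℤ, Int.gcd k (n * N) = 1 → Int.fract ((k : ℝ) / N) < 1 / 2 →
      Int.fract ((k : ℝ) * a / n) + Int.fract ((k : ℝ) * b / n)
        + Int.fract ((k : ℝ) * c / n) = 1) :
    (b : ℝ) / n = 1 / N ∧ (c : ℝ) / n = 1 / N := by
  have hn : 0 < n := by omega
  have hN0 : 0 < N := by omega
  have hN' : (0 : ℝ) < N := by exact_mod_cast hN0
  have hn' : (0 : ℝ) < n := by exact_mod_cast hn
  have hsumR : ((b : ℝ) + c) * N = 2 * n := by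
    rw [div_eq_div_iff hn'.ne' hN'.ne'] at han
    have : (a : ℝ) + b + c = n := by exact_mod_cast habc
    linear_combination (N : ℝ) * this - han
  have hsum : ((b : ℤ) + c) * N = 2 * n := by exact_mod_cast hsumR
  set T : ℤ := b * N - n with hTdef
  have hbN : (0 : ℤ) < b * N := by positivity
  have hcN : (0 : ℤ) < c * N := by positivity
  have hTn : |T| < n := by
    rw [abs_lt, hTdef]
    constructor <;> linarith
  have H : ∀ r : ℤ, 0 < r → 2 * r < N → ∀ k : ℤ, IsCoprime k ((n * N : ℕ) : ℤ) →
      (N : ℤ) ∣ k - r → ∃ m : ℤ, |k * T - m * (n * N)| ≤ r * n := by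
    intro r hr hrN k hk hkr
    refine exists_abs_sub_le_of_fract (c := c) hN0 hn han hr hrN hkr (h k ?_)
    have := Int.isCoprime_iff_gcd_eq_one.1 hk
    simpa using this
  -- `g = gcd(T, n)`, so that `t = T/(nN) = T'/(eN)` with `T'` and `e` coprime.
  obtain ⟨g, T', e, hg, hTe, hT', he⟩ : ∃ (g : ℤ) (T' e : ℤ), 0 < g ∧ IsCoprime T' e ∧
      T = g * T' ∧ (n : ℤ) = g * e := by
    have hg : 0 < Int.gcd T n := Int.gcd_pos_of_ne_zero_right _ (by exact_mod_cast hn.ne')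
    refine ⟨Int.gcd T n, T / Int.gcd T n, n / Int.gcd T n, by exact_mod_cast hg, ?_, ?_, ?_⟩
    · rw [Int.isCoprime_iff_gcd_eq_one]
      exact Int.gcd_div_gcd_div_gcd hg
    · exact (Int.mul_ediv_cancel' (Int.gcd_dvd_left ..)).symm
    · exact (Int.mul_ediv_cancel' (Int.gcd_dvd_right ..)).symm
  have he0 : 0 < e := by
    have : 0 < g * e := by rw [← he]; exact_mod_cast hn
    exact pos_of_mul_pos_right this hg.le
  lift e to ℕ using he0.le with e'
  have hdvd : e' * N ∣ n * N := by
    refine mul_dvd_mul_right ?_ N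
    have : (e' : ℤ) ∣ n := ⟨g, by rw [he]; ring⟩
    exact_mod_cast this
  have H' : ∀ r : ℤ, 0 < r → 2 * r < N → ∀ k : ℤ, IsCoprime k ((e' : ℤ) * N) →
      (N : ℤ) ∣ k - r → ∃ m : ℤ, |k * T' - m * (e' * N)| ≤ r * e' := by
    intro r hr hrN k hk hkr
    obtain ⟨q, hq⟩ := exists_lift_isCoprime (Nat.mul_ne_zero hn.ne' hN0.ne') hdvd
      (k := k) (by push_cast; exact hk)
    obtain ⟨w, hw⟩ := hkr
    obtain ⟨m, hm⟩ := H r hr hrN _ hq ⟨w + e' * q, by push_cast; linear_combination hw⟩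
    refine ⟨m - q * T', ?_⟩
    rw [hT', he] at hm
    have e1 : (k + ((e' * N : ℕ) : ℤ) * q) * (g * T') - m * (g * e' * N)
        = g * (k * T' - (m - q * T') * (e' * N)) := by push_cast; ring
    rw [e1, abs_mul, abs_of_pos hg] at hm
    refine le_of_mul_le_mul_left ?_ hg
    linarith
  have hT0 : T' = 0 := by
    refine eq_zero_of_coprime (N := N) (by exact_mod_cast hN) he0 ?_ hTe ?_ ?_
    · rw [hT', he, abs_mul, abs_of_pos hg] at hTn
      exact lt_of_mul_lt_mul_left hTn hg.le
    · simpa using H' 1 (by norm_num) (by omega)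
    · exact H' 2 (by norm_num) (by omega)
  have hbn : (b : ℤ) * N = n := by
    rw [hT0, mul_zero] at hT'
    linarith
  have hcn : (c : ℤ) * N = n := by linarith
  have hbn' : (b : ℝ) * N = n := by exact_mod_cast hbn
  have hcn' : (c : ℝ) * N = n := by exact_mod_cast hcn
  constructor
  · rw [div_eq_div_iff hn'.ne' hN'.ne']; linarith
  · rw [div_eq_div_iff hn'.ne' hN'.ne']; linarith
end

section
/- Let N > 10 be an integer and let a, b, n be positive integers with a + b < n and (a + b)/n = (N−2)/N. Suppose that for every integer k with gcd(k, nN) = 1 and {k/N} < 1/2 one has {ka/n} + {kb/n} = 1 − 2{k/N}. Then a/n = b/n = (N−2)/(2N). -/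
/-!
Put `ε = 1/2 - 1/N` and `δ = (a - b)/(2n)`, so that `a/n = ε + δ` and `b/n = ε - δ`, and write
`‖t‖` for the distance from `t` to the nearest integer. For odd `k` the fractional-part equation
means `‖kδ‖ ≤ ‖kε‖` (`dist_le_of_fract_half`); the symmetry `k ↦ -k` then gives this inequality for
every unit `k` modulo `2nN`. All of this is written with integers: `δ = x/M` and `ε = y/M` with
`M = 2nN`.

Let `E` be the order of `ε` modulo `1`; since `N > 10`, one has `E ≥ 7`. Multiplying by a unit one
may assume `ε = 1/E`. Taking `k ≡ 1` modulo `E`, all the numbers `kδ` must lie within `1/E` of an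
integer. If `Eδ` has order divisible by an odd prime, or by `4`, or by `2` with `E` even, such `kδ`
are too spread out for this (`no_prime`, `dvd_of_close`). So either `Eδ` is an integer, and then
`δ ∈ {0, ε, -ε}` modulo `1`, or `δ = ±1/(2E)` modulo `1` with `E` odd. The last possibility is
excluded by `k ≡ E - 2` modulo `2E`, for which `‖kδ‖ = 1/2 - 1/E > 2/E = ‖kε‖` (`core`).
Finally `δ = ε` would give `b = 0` and `δ = -ε` would give `a = 0`, so `δ = 0` and `a = b`.
-/

/-! ### Multiples by units congruent to 1 modulo E -/

/-- The number `1 + j T E` is automatically prime to `E` and to every prime factor of `d` that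
divides `T`, so only the single prime `q` has to be checked. -/
lemma one_add_coprime {E d T : ℤ} {q : ℕ} (j : ℤ)
    (hp : ∀ p : ℕ, p.Prime → (p : ℤ) ∣ d → p ≠ q → (p : ℤ) ∣ T)
    (hq : ¬ (q : ℤ) ∣ 1 + j * T * E) : IsCoprime (1 + j * T * E) (d * E) := by
  rw [Int.isCoprime_iff_gcd_eq_one]
  by_contra hg
  obtain ⟨p, hpp, hpd⟩ := Nat.exists_prime_and_dvd hg
  have h1 : (p : ℤ) ∣ 1 + j * T * E :=
    (Int.natCast_dvd_natCast.mpr hpd).trans (Int.gcd_dvd_left _ _)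
  have h2 : (p : ℤ) ∣ d * E :=
    (Int.natCast_dvd_natCast.mpr hpd).trans (Int.gcd_dvd_right _ _)
  have hpZ : Prime (p : ℤ) := Nat.prime_iff_prime_int.mp hpp
  have key : (p : ℤ) ∣ T * E := by
    rcases hpZ.dvd_or_dvd h2 with h | h
    · have hne : p ≠ q := by rintro rfl; exact hq h1
      exact (hp p hpp h hne).mul_right E
    · exact h.mul_left T
  have h3 : (p : ℤ) ∣ 1 := by
    have := dvd_sub h1 (key.mul_left j)
    have e : 1 + j * T * E - j * (T * E) = 1 := by ring
    rwa [e] at this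
  exact hpZ.not_isUnit (isUnit_of_dvd_one h3)

/-- The equidistribution step. The hypothesis on `T` and `c` says that `x T / d ≡ c / q` modulo `1`
has order exactly `q`. As `j` varies, `(1 + j T E) x / (d E)` is `x / (d E) + j c / q`; these are
not all within `1 / E` of an integer when `j` is only restricted by `q ∤ 1 + j T E`. For odd `q`,
at least one of two opposite values of `j` with `j c ≡ ±(q - 1) / 2` is allowed; for `q = 2` the
parity condition makes `j = 1` allowed. -/
lemma no_prime {E d x T c : ℤ} {q : ℕ} (hE : 7 ≤ E) (hd : 0 < d) (hx : |x| ≤ d)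
    (H : ∀ t : ℤ, IsCoprime (1 + t * E) (d * E) → ∃ l : ℤ, |(1 + t * E) * x - l * (d * E)| ≤ d)
    (hq : q.Prime) (hT : q * (x * T) = d * c) (hqc : ¬ (q : ℤ) ∣ c)
    (hp : ∀ p : ℕ, p.Prime → (p : ℤ) ∣ d → p ≠ q → (p : ℤ) ∣ T)
    (h2 : q = 2 → (2 : ℤ) ∣ T * E) : False := by
  have hqZ : Prime (q : ℤ) := Nat.prime_iff_prime_int.mp hq
  have hxl := abs_le.mp hx
  have hq0 : (0 : ℤ) < q := by exact_mod_cast hq.pos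
  -- `q * k * x` for `k = 1 + j * T * E`, up to a multiple of `q * d * E`
  have main : ∀ j : ℤ, ¬ (q : ℤ) ∣ 1 + j * T * E →
      ∃ l : ℤ, |q * x + E * d * (j * c - q * l)| ≤ q * d := by
    intro j hj
    obtain ⟨l, hl⟩ := H (j * T) (one_add_coprime j hp hj)
    refine ⟨l, ?_⟩
    have e : q * x + E * d * (j * c - q * l) = q * ((1 + j * T * E) * x - l * (d * E)) := by
      linear_combination (-E * j) * hT
    rw [e, abs_mul, abs_of_pos hq0]
    exact mul_le_mul_of_nonneg_left hl hq0.le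
  -- the right-hand side allows only `r` of size less than about `q / 3`
  have size : ∀ m r : ℤ, 0 < m → q ≤ 3 * m → (m ≤ r ∨ r ≤ -m) →
      ¬ |q * x + E * d * r| ≤ q * d := by
    intro m r hm hqm hr hle
    rw [abs_le] at hle
    have hEd : 7 * d ≤ E * d := mul_le_mul_of_nonneg_right hE hd.le
    have a1 : (q : ℤ) * x ≤ q * d := mul_le_mul_of_nonneg_left hxl.2 hq0.le
    have a2 : (q : ℤ) * (-d) ≤ q * x := mul_le_mul_of_nonneg_left hxl.1 hq0.le
    have a3 : (q : ℤ) * d ≤ 3 * m * d := mul_le_mul_of_nonneg_right hqm hd.le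
    have hmd : 0 < m * d := mul_pos hm hd
    have a4 : 7 * d * m ≤ E * d * m := mul_le_mul_of_nonneg_right hEd hm.le
    rcases hr with hr | hr
    · have : E * d * m ≤ E * d * r := mul_le_mul_of_nonneg_left hr (by linarith)
      nlinarith
    · have : E * d * r ≤ E * d * (-m) := mul_le_mul_of_nonneg_left hr (by linarith)
      nlinarith
  rcases hq.eq_two_or_odd' with rfl | ⟨m, hm⟩
  · have hTE := h2 rfl
    obtain ⟨l, hl⟩ := main 1 (by push_cast; rw [one_mul]; omega)
    push_cast at hqc
    refine size 1 _ one_pos (by norm_num) ?_ hl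
    push_cast
    omega
  · have hm1 : 1 ≤ m := by have := hq.two_le; omega
    have hcop : IsCoprime (q : ℤ) c := (hqZ.coprime_iff_not_dvd).mpr hqc
    obtain ⟨u, w, huw⟩ := hcop
    -- `q` cannot divide both `1 + j * T * E` and `1 - j * T * E`, since their sum is `2`
    have hj : ∃ j : ℤ, ¬ (q : ℤ) ∣ 1 + j * T * E ∧ (j = w * m ∨ j = - (w * m)) := by
      by_contra! hcon
      have b1 : (q : ℤ) ∣ 1 + (w * m) * T * E := by
        by_contra hh; exact (hcon _ hh).1 rfl
      have b2 : (q : ℤ) ∣ 1 + (-(w * m)) * T * E := by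
        by_contra hh; exact (hcon _ hh).2 rfl
      have b3 : (q : ℤ) ∣ 2 := by
        have := dvd_add b1 b2
        have e : 1 + (w * m) * T * E + (1 + (-(w * m)) * T * E) = 2 := by ring
        rwa [e] at this
      have := Int.le_of_dvd (by norm_num) b3
      omega
    obtain ⟨j, hj, hj'⟩ := hj
    obtain ⟨l, hl⟩ := main j hj
    refine size m _ (by exact_mod_cast hm1) (by rw [hm]; push_cast; omega) ?_ hl
    have hqm : (q : ℤ) = 2 * m + 1 := by exact_mod_cast hm
    have hm0 : (1 : ℤ) ≤ m := by exact_mod_cast hm1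
    rcases hj' with rfl | rfl
    · have e : w * m * c - q * l = m + (2 * m + 1) * (- (u * m) - l) := by
        rw [hqm] at huw ⊢; linear_combination (m : ℤ) * huw
      rw [e]
      generalize - (u * m) - l = s
      rcases le_or_gt 0 s with hs | hs
      · left; nlinarith
      · right; nlinarith
    · have e : -(w * m) * c - q * l = - m + (2 * m + 1) * (u * m - l) := by
        rw [hqm] at huw ⊢; linear_combination (-m : ℤ) * huw
      rw [e]
      generalize u * m - l = s
      rcases le_or_gt s 0 with hs | hs
      · right; nlinarith
      · left; nlinarith

/-- If all `k x` with `k ≡ 1` modulo `E` prime to `d E` lie within `d` of a multiple of `d E`,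
then `d ∣ 2 x`, and even `d ∣ x` when `E` is even. Otherwise some prime `q` divides the order of
`X / d` modulo `1`, and multiplying `x` by the part of `d` prime to `q` and by a suitable power of
`q` gives a fraction of order exactly `q`, contradicting `no_prime`. -/
lemma dvd_of_close {E d x X : ℤ} (hE : 7 ≤ E) (hd : 0 < d) (hx : |x| ≤ d)
    (H : ∀ t : ℤ, IsCoprime (1 + t * E) (d * E) → ∃ l : ℤ, |(1 + t * E) * x - l * (d * E)| ≤ d)
    (hX : X = 2 * x ∨ (X = x ∧ 2 ∣ E)) : d ∣ X := by
  by_contra hdX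
  have hd0 : d.natAbs ≠ 0 := by omega
  obtain ⟨q, k, hq, hk1, hk2⟩ : ∃ q k : ℕ, q.Prime ∧ q ^ k ∣ d.natAbs ∧ ¬ q ^ k ∣ X.natAbs := by
    by_contra! hcon
    exact hdX (Int.natAbs_dvd_natAbs.mp ((Nat.dvd_iff_prime_pow_dvd_dvd _ _).mpr hcon))
  obtain ⟨v, m, hqm, hdm⟩ := Nat.exists_eq_pow_mul_and_not_dvd hd0 q hq.ne_one
  have hdm' : d = (q : ℤ) ^ v * m := by
    have : (d.natAbs : ℤ) = d := by omega
    rw [← this, hdm]; push_cast; rfl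
  have hcop : ∀ s : ℕ, Nat.Coprime (q ^ s) m := fun s =>
    Nat.Coprime.pow_left _ ((Nat.Prime.coprime_iff_not_dvd hq).mpr hqm)
  have hkv : q ^ k ∣ q ^ v := by
    rw [hdm] at hk1
    exact (hcop k).dvd_of_dvd_mul_right hk1
  have hXm : ¬ d ∣ X * m := by
    intro hh
    apply hk2
    refine hkv.trans ((hcop v).dvd_of_dvd_mul_right ?_)
    have := Int.natAbs_dvd_natAbs.mpr hh
    rw [Int.natAbs_mul, Int.natAbs_natCast, hdm] at this
    exact (Dvd.intro _ rfl).trans this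
  -- the least power of `q` that is needed on top of `m`
  have hex : ∃ i : ℕ, d ∣ x * m * (q : ℤ) ^ i := ⟨v, by
    rw [hdm']; exact ⟨x, by ring⟩⟩
  classical
  obtain ⟨i, hi, hmin⟩ : ∃ i : ℕ, d ∣ x * m * (q : ℤ) ^ i ∧
      ∀ j < i, ¬ d ∣ x * m * (q : ℤ) ^ j :=
    ⟨Nat.find hex, Nat.find_spec hex, fun j hj => Nat.find_min hex hj⟩
  have hi0 : i ≠ 0 := by
    rintro rfl
    rw [pow_zero, mul_one] at hi
    apply hXm
    rcases hX with rfl | ⟨rfl, -⟩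
    · rw [mul_assoc]; exact hi.mul_left 2
    · exact hi
  obtain ⟨i, rfl⟩ := Nat.exists_eq_succ_of_ne_zero hi0
  obtain ⟨c, hc⟩ := hi
  refine no_prime (T := m * (q : ℤ) ^ i) (c := c) hE hd hx H hq ?_ ?_ ?_ ?_
  · rw [← hc, pow_succ]; ring
  · rintro ⟨c', rfl⟩
    apply hmin i (Nat.lt_succ_self i)
    refine ⟨c', mul_left_cancel₀ (a := (q : ℤ)) (by exact_mod_cast hq.ne_zero) ?_⟩
    rw [pow_succ] at hc
    linear_combination hc
  · intro p hp hpd hpq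
    rw [hdm'] at hpd
    have hpZ : Prime (p : ℤ) := Nat.prime_iff_prime_int.mp hp
    rcases hpZ.dvd_or_dvd hpd with h | h
    · have := hpZ.dvd_of_dvd_pow h
      exact absurd ((Nat.prime_dvd_prime_iff_eq hp hq).mp (by exact_mod_cast this)) hpq
    · exact h.mul_right _
  · rintro rfl
    rcases hX with rfl | ⟨-, hE2⟩
    · rcases i with _ | i
      · refine absurd ?_ hXm
        refine ⟨c, ?_⟩
        rw [← hc]; push_cast; ring
      · rw [pow_succ]; exact ⟨m * 2 ^ i * E, by push_cast; ring⟩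
    · exact hE2.mul_left _

/-! ### Domination of distances by a primitive fraction -/

/-- Units modulo a divisor `m` of `M` lift to units modulo `M`. -/
lemma exists_coprime_lift {k m M : ℤ} (hM : 0 < M) (hm : m ∣ M) (hk : IsCoprime k m) :
    ∃ j : ℤ, IsCoprime (k + m * j) M := by
  have hm0 : m ≠ 0 := by rintro rfl; rw [zero_dvd_iff] at hm; omega
  have : NeZero M.natAbs := ⟨by omega⟩
  have : NeZero m.natAbs := ⟨by omega⟩
  have hu : IsUnit ((k : ℤ) : ZMod m.natAbs) := by
    rw [ZMod.coe_int_isUnit_iff_isCoprime, Int.natCast_natAbs, IsCoprime.abs_left_iff]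
    exact hk.symm
  have hmM := Int.natAbs_dvd_natAbs.mpr hm
  obtain ⟨u, hu'⟩ := ZMod.unitsMap_surjective hmM hu.unit
  have h1 : (ZMod.castHom hmM (ZMod m.natAbs)) (u : ZMod M.natAbs) = (k : ZMod m.natAbs) := by
    have := congrArg Units.val hu'
    simpa [ZMod.unitsMap_def] using this
  obtain ⟨K, hK⟩ := ZMod.intCast_surjective (u : ZMod M.natAbs)
  rw [← hK, map_intCast, eq_comm, ZMod.intCast_eq_intCast_iff_dvd_sub] at h1
  obtain ⟨j, hj⟩ := (Int.natAbs_dvd.mp h1)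
  refine ⟨j, ?_⟩
  have e : k + m * j = K := by linarith
  rw [e]
  have hKu : IsUnit ((K : ℤ) : ZMod M.natAbs) := hK ▸ u.isUnit
  rw [ZMod.coe_int_isUnit_iff_isCoprime, Int.natCast_natAbs, IsCoprime.abs_left_iff] at hKu
  exact hKu.symm

/-- If `k x / M` is at least as close to an integer as `k d / M` for all units `k` modulo
`M = d E`, then `x ≡ 0` or `x ≡ ± d` modulo `M`. The bound on `E` is essentially sharp: for `E = 5`,
`d = 2` also `x = 1` satisfies the hypothesis. -/
lemma core {E d x : ℤ} (hE : 7 ≤ E) (hd : 0 < d)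
    (H : ∀ k : ℤ, IsCoprime k (d * E) → ∀ w : ℤ, ∃ l : ℤ,
      |k * x - l * (d * E)| ≤ |k * d - w * (d * E)|) :
    d * E ∣ x ∨ d * E ∣ x - d ∨ d * E ∣ x + d := by
  have hM : 0 < d * E := mul_pos hd (by omega)
  obtain ⟨l₀, hl₀⟩ := H 1 isCoprime_one_left 0
  rw [one_mul, one_mul, zero_mul, sub_zero, abs_of_pos hd] at hl₀
  obtain ⟨z, hz⟩ : ∃ z, z = x - l₀ * (d * E) := ⟨_, rfl⟩
  rw [← hz] at hl₀
  have hxz : x = z + l₀ * (d * E) := by rw [hz]; ring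
  have H' : ∀ k : ℤ, IsCoprime k (d * E) → ∀ w : ℤ, ∃ l : ℤ,
      |k * z - l * (d * E)| ≤ |k * d - w * (d * E)| := by
    intro k hk w
    obtain ⟨l, hl⟩ := H k hk w
    refine ⟨l - k * l₀, ?_⟩
    have e : k * z - (l - k * l₀) * (d * E) = k * x - l * (d * E) := by rw [hz]; ring
    rwa [e]
  have H1 : ∀ t : ℤ, IsCoprime (1 + t * E) (d * E) →
      ∃ l : ℤ, |(1 + t * E) * z - l * (d * E)| ≤ d := by
    intro t ht
    obtain ⟨l, hl⟩ := H' _ ht t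
    refine ⟨l, hl.trans_eq ?_⟩
    have e : (1 + t * E) * d - t * (d * E) = d := by ring
    rw [e, abs_of_pos hd]
  have hz' := abs_le.mp hl₀
  by_cases hdz : d ∣ z
  · obtain ⟨s, rfl⟩ := hdz
    have s1 : s ≤ 1 := by nlinarith
    have s2 : -1 ≤ s := by nlinarith
    obtain rfl | rfl | rfl : s = 0 ∨ s = 1 ∨ s = -1 := by omega
    · exact Or.inl ⟨l₀, by rw [hxz]; ring⟩
    · exact Or.inr (Or.inl ⟨l₀, by rw [hxz]; ring⟩)
    · exact Or.inr (Or.inr ⟨l₀, by rw [hxz]; ring⟩)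
  · exfalso
    have hE2 : ¬ (2 : ℤ) ∣ E := fun h => hdz (dvd_of_close hE hd hl₀ H1 (Or.inr ⟨rfl, h⟩))
    obtain ⟨r, hr⟩ := dvd_of_close hE hd hl₀ H1 (Or.inl rfl)
    have r1 : r ≤ 2 := by nlinarith
    have r2 : -2 ≤ r := by nlinarith
    have hr' : r = 1 ∨ r = -1 := by
      have : r ≠ 0 := by rintro rfl; exact hdz ⟨0, by omega⟩
      have : r ≠ 2 := by rintro rfl; exact hdz ⟨1, by omega⟩
      have : r ≠ -2 := by rintro rfl; exact hdz ⟨-1, by omega⟩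
      omega
    have hd2 : (2 : ℤ) ∣ d := by rcases hr' with rfl | rfl <;> omega
    obtain ⟨m, rfl⟩ : ∃ m, E = 2 * m + 1 := ⟨E / 2, by omega⟩
    -- now `z = ± d / 2`, which a unit `k ≡ E - 2` modulo `2 * E` excludes
    have hc : IsCoprime (2 * m + 1 - 2) (2 * (2 * m + 1)) := by
      refine IsCoprime.mul_right ⟨1, 1 - m, by ring⟩ ⟨m, 1 - m, by ring⟩
    obtain ⟨j, hj⟩ := exists_coprime_lift hM (mul_dvd_mul_right hd2 (2 * m + 1)) hc
    obtain ⟨l, hl⟩ := H' _ hj (1 + 2 * j)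
    have e : (2 * m + 1 - 2 + 2 * (2 * m + 1) * j) * d - (1 + 2 * j) * (d * (2 * m + 1)) = -(2 * d) := by
      ring
    rw [e, abs_neg, abs_of_pos (show 0 < 2 * d by linarith)] at hl
    -- twice the left side is `d` times an integer that is `±(E - 2)` modulo `2 * E`
    have e2 : 2 * ((2 * m + 1 - 2 + 2 * (2 * m + 1) * j) * z - l * (d * (2 * m + 1)))
        = d * (r * (2 * m - 1) + 2 * (2 * m + 1) * (r * j) - 2 * (2 * m + 1) * l) := by
      linear_combination (2 * m + 1 - 2 + 2 * (2 * m + 1) * j) * hr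
    rw [abs_le] at hl
    have u1 : d * (r * (2 * m - 1) + 2 * (2 * m + 1) * (r * j) - 2 * (2 * m + 1) * l) ≤ d * 4 := by
      rw [← e2]; linarith
    have u2 : d * (-4) ≤ d * (r * (2 * m - 1) + 2 * (2 * m + 1) * (r * j) - 2 * (2 * m + 1) * l) := by
      rw [← e2]; linarith
    have u1 := le_of_mul_le_mul_left u1 hd
    have u2 := le_of_mul_le_mul_left u2 hd
    obtain ⟨g, hg⟩ : ∃ g, g = r * j - l := ⟨_, rfl⟩
    have u3 : r * (2 * m - 1) + 2 * (2 * m + 1) * (r * j) - 2 * (2 * m + 1) * l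
        = r * (2 * m - 1) + 2 * (2 * m + 1) * g := by rw [hg]; ring
    rw [u3] at u1 u2
    rcases hr' with rfl | rfl
    · rcases le_or_gt 0 g with h | h <;> nlinarith
    · rcases le_or_gt g 0 with h | h <;> nlinarith

/-! ### From fractional parts to distances, and the conclusion -/

/-- The fractional-part equation at `k` says that `k (a - b) / (2n)` is at least as close to an
integer as `k (N - 2) / (2N)`; here both sides are multiplied by `2nN`. For odd `k`, modulo `1`
the two numbers are `(A - B) / 2` and `(A + B) / 2`, where `A = {ka/n}` and `B = {kb/n}`. -/
lemma dist_le_of_fract_half {N a b n : ℕ} {k : ℤ} (hN : 0 < N) (hn : 0 < n)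
    (habn : ((a : ℝ) + b) / n = ((N : ℝ) - 2) / N) (hodd : Odd k)
    (hk : Int.fract ((k : ℝ) * a / n) + Int.fract ((k : ℝ) * b / n)
        = 1 - 2 * Int.fract ((k : ℝ) / N)) (w : ℤ) :
    ∃ l : ℤ, |k * (((a : ℤ) - b) * N) - l * (2 * n * N)|
      ≤ |k * (((N : ℤ) - 2) * n) - w * (2 * n * N)| := by
  have hN' : (0 : ℝ) < N := by exact_mod_cast hN
  have hn' : (0 : ℝ) < n := by exact_mod_cast hn
  obtain ⟨s, rfl⟩ := hodd
  set k : ℤ := 2 * s + 1 with hkdef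
  have eA := Int.fract_add_floor ((k : ℝ) * a / n)
  have eB := Int.fract_add_floor ((k : ℝ) * b / n)
  have eC := Int.fract_add_floor ((k : ℝ) / N)
  have A0 := Int.fract_nonneg ((k : ℝ) * a / n)
  have B0 := Int.fract_nonneg ((k : ℝ) * b / n)
  have C0 := Int.fract_nonneg ((k : ℝ) / N)
  generalize Int.fract ((k : ℝ) * a / n) = A at *
  generalize Int.fract ((k : ℝ) * b / n) = B at *
  generalize Int.fract ((k : ℝ) / N) = C at *
  generalize ⌊(k : ℝ) * a / n⌋ = fa at *
  generalize ⌊(k : ℝ) * b / n⌋ = fb at *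
  generalize ⌊(k : ℝ) / N⌋ = fc at *
  have hsum : (k : ℝ) * a / n + (k : ℝ) * b / n = k - 2 * (k / N) := by
    have : (k : ℝ) * a / n + (k : ℝ) * b / n = k * (((a : ℝ) + b) / n) := by ring
    rw [this, habn]; field_simp
  have hf : fa + fb = 2 * (s - fc) := by
    have : (fa : ℝ) + fb = 2 * (s - fc) := by
      have : (k : ℝ) = 2 * s + 1 := by rw [hkdef]; push_cast; ring
      linarith
    exact_mod_cast this
  have hf' : (fa : ℝ) + fb = 2 * (s - fc) := by exact_mod_cast hf
  refine ⟨fa - (s - fc), ?_⟩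
  have hpos : (0 : ℝ) < n * N := mul_pos hn' hN'
  have e1 : (k : ℝ) * (((a : ℝ) - b) * N) - (fa - (s - fc)) * (2 * n * N) = (A - B) * (n * N) := by
    have h1 : (k : ℝ) * (((a : ℝ) - b) * N) = (k * a / n - k * b / n) * (n * N) := by
      field_simp
    rw [h1, ← eA, ← eB]
    linear_combination (-(n * N : ℝ)) * hf'
  have e2 : (k : ℝ) * (((N : ℝ) - 2) * n) - w * (2 * n * N)
      = (A + B + 2 * (s - fc - w : ℤ)) * (n * N) := by
    have h1 : (k : ℝ) * (((N : ℝ) - 2) * n) = (k - 2 * (k / N)) * (n * N) := by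
      field_simp
    rw [h1, ← hsum, ← eA, ← eB]
    push_cast
    linear_combination ((n * N : ℝ)) * hf'
  have key : |(k : ℝ) * (((a : ℝ) - b) * N) - (fa - (s - fc)) * (2 * n * N)|
      ≤ |(k : ℝ) * (((N : ℝ) - 2) * n) - w * (2 * n * N)| := by
    rw [e1, e2, abs_mul (A - B), abs_mul (A + B + _)]
    refine mul_le_mul_of_nonneg_right ?_ (abs_nonneg _)
    have h1 : |A - B| ≤ A + B := abs_le.mpr ⟨by linarith, by linarith⟩
    refine h1.trans ?_
    generalize s - fc - w = g
    rw [le_abs]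
    -- `A + B ∈ [0, 1]` is at least as close to `0` as to any other even integer
    rcases le_or_gt 0 g with hg | hg
    · left
      have : (0 : ℝ) ≤ g := by exact_mod_cast hg
      linarith
    · right
      have : (g : ℝ) ≤ -1 := by exact_mod_cast Int.le_sub_one_of_lt hg
      linarith
  exact_mod_cast key

/-- Let `N > 10` and let `a, b, n` be positive integers with `a + b < n` and
`(a+b)/n = (N-2)/N`. If `{ka/n} + {kb/n} = 1 - 2{k/N}` for every integer `k` with
`gcd(k, nN) = 1` and `{k/N} < 1/2`, then `a/n = b/n = (N-2)/(2N)`. -/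
theorem statement16 (N a b n : ℕ) (hN : 10 < N)
    (ha : 0 < a) (hb : 0 < b) (hn : 0 < n) (hab : a + b < n)
    (habn : ((a : ℝ) + b) / n = ((N : ℝ) - 2) / N)
    (h : ∀ k : ℤ, Int.gcd k (n * N) = 1 → Int.fract ((k : ℝ) / N) < 1 / 2 →
      Int.fract ((k : ℝ) * a / n) + Int.fract ((k : ℝ) * b / n)
        = 1 - 2 * Int.fract ((k : ℝ) / N)) :
    (a : ℝ) / n = ((N : ℝ) - 2) / (2 * N) ∧ (b : ℝ) / n = ((N : ℝ) - 2) / (2 * N) := by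
  have hN0 : (0 : ℝ) < N := by exact_mod_cast (by omega : 0 < N)
  have hn0 : (0 : ℝ) < n := by exact_mod_cast hn
  have hNZ : (10 : ℤ) < N := by exact_mod_cast hN
  have hnZ : (0 : ℤ) < n := by exact_mod_cast hn
  have hsumZ : ((a : ℤ) + b) * N = (N - 2) * n := by
    have : ((a : ℝ) + b) * N = (N - 2) * n := by
      rw [div_eq_div_iff hn0.ne' hN0.ne'] at habn; exact habn
    exact_mod_cast this
  suffices hEq : a = b by
    subst hEq
    have : (a : ℝ) / n = ((N : ℝ) - 2) / (2 * N) := by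
      have e : ((a : ℝ) + a) / n = 2 * (a / n) := by ring
      rw [e] at habn
      rw [mul_comm (2 : ℝ) (N : ℝ), ← div_div, ← habn]; ring
    exact ⟨this, this⟩
  have key : ∀ k : ℤ, IsCoprime k (2 * n * N) → ∀ w : ℤ, ∃ l : ℤ,
      |k * (((a : ℤ) - b) * N) - l * (2 * n * N)|
        ≤ |k * (((N : ℤ) - 2) * n) - w * (2 * n * N)| := by
    intro k hk w
    have hodd : Odd k := by
      rw [← Int.not_even_iff_odd, even_iff_two_dvd]
      intro h2
      have := hk.isUnit_of_dvd' h2 ⟨n * N, by ring⟩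
      exact absurd this (by decide)
    have hcop : ∀ k : ℤ, IsCoprime k (2 * n * N) → Int.gcd k (n * N) = 1 := by
      intro k hk
      rw [← Int.isCoprime_iff_gcd_eq_one]
      exact hk.of_isCoprime_of_dvd_right ⟨2, by ring⟩
    rcases lt_trichotomy (Int.fract ((k : ℝ) / N)) (1 / 2) with hlt | heq | hgt
    · exact dist_le_of_fract_half (by omega) hn habn hodd (h k (hcop k hk) hlt) w
    · exfalso
      have hfl := Int.fract_add_floor ((k : ℝ) / N)
      generalize ⌊(k : ℝ) / N⌋ = f at hfl
      rw [heq, eq_div_iff hN0.ne'] at hfl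
      have h2k : (N : ℤ) * (1 + 2 * f) = 2 * k := by
        have : (N : ℝ) * (1 + 2 * f) = 2 * k := by linarith
        exact_mod_cast this
      have hcN : IsCoprime (N : ℤ) k :=
        (hk.of_isCoprime_of_dvd_right ⟨2 * n, by ring⟩).symm
      have := Int.le_of_dvd (by norm_num) (hcN.dvd_of_dvd_mul_right ⟨_, h2k.symm⟩)
      omega
    · have hlt : Int.fract (((-k : ℤ) : ℝ) / N) < 1 / 2 := by
        have e : ((-k : ℤ) : ℝ) / N = -((k : ℝ) / N) := by push_cast; ring
        rw [e, Int.fract_neg (by linarith)]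
        linarith
      obtain ⟨l, hl⟩ := dist_le_of_fract_half (by omega) hn habn hodd.neg
        (h (-k) (hcop _ hk.neg_left) hlt) (-w)
      refine ⟨-l, ?_⟩
      rw [← abs_neg, ← abs_neg (k * (((N : ℤ) - 2) * n) - w * (2 * n * N))]
      convert hl using 2 <;> ring
  -- a unit `v` modulo `2 * n * N` that carries `(N - 2) * n` to a divisor `d` of the modulus
  obtain ⟨d, E, v, c, hd, hM, hv, hc⟩ : ∃ d E v c : ℤ, 0 < d ∧ 2 * n * N = d * E ∧
      IsCoprime v (2 * n * N) ∧ v * (((N : ℤ) - 2) * n) = d + c * (2 * n * N) := by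
    have : NeZero (2 * n * N) := ⟨by positivity⟩
    obtain ⟨d, ⟨E, hdE⟩, u, hu, hyu⟩ :=
      ZMod.eq_unit_mul_divisor (N := 2 * n * N) (((((N : ℤ) - 2) * n : ℤ)) : ZMod (2 * n * N))
    obtain ⟨u, rfl⟩ := hu
    obtain ⟨v, hv⟩ := ZMod.intCast_surjective ((u⁻¹ : (ZMod (2 * n * N))ˣ) : ZMod (2 * n * N))
    have hvu : IsUnit ((v : ℤ) : ZMod (2 * n * N)) := hv ▸ (u⁻¹).isUnit
    rw [ZMod.coe_int_isUnit_iff_isCoprime] at hvu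
    have hz : ((d : ℤ) : ZMod (2 * n * N)) = ((v * (((N : ℤ) - 2) * n) : ℤ) : ZMod (2 * n * N)) := by
      rw [Int.cast_mul, hyu, hv, ← mul_assoc, Units.inv_mul, one_mul, Int.cast_natCast]
    rw [ZMod.intCast_eq_intCast_iff_dvd_sub] at hz
    obtain ⟨c, hc⟩ := hz
    push_cast at hc hvu
    refine ⟨d, E, v, c, ?_, by exact_mod_cast hdE, hvu.symm, by linarith⟩
    have : d ≠ 0 := by rintro rfl; rw [zero_mul] at hdE; exact NeZero.ne _ hdE
    omega
  have hMpos : (0 : ℤ) < 2 * n * N := by positivity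
  have hdy : d ∣ ((N : ℤ) - 2) * n := by
    have h1 : d ∣ 2 * n * N := ⟨E, hM⟩
    have h2 : d ∣ v * (((N : ℤ) - 2) * n) := by rw [hc]; exact dvd_add dvd_rfl (h1.mul_left c)
    exact (hv.symm.of_isCoprime_of_dvd_left h1).dvd_of_dvd_mul_left h2
  have hE : 7 ≤ E := by
    have h4 : d ∣ 4 * n := by
      have := dvd_sub (Dvd.intro E hM.symm) (hdy.mul_left 2)
      have e : 2 * (n : ℤ) * N - 2 * ((N - 2) * n) = 4 * n := by ring
      rwa [e] at this
    obtain ⟨r, hr⟩ := h4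
    have hr0 : 0 < r := by
      by_contra! hr0
      nlinarith
    -- `E = r * N / 2`
    have hEr : 2 * E = r * N := by
      have : d * (2 * E) = d * (r * N) := by linear_combination (-2) * hM + (N : ℤ) * hr
      exact mul_left_cancel₀ hd.ne' this
    rcases (by omega : r = 1 ∨ 2 ≤ r) with rfl | hr2
    · -- here `d = 4 * n`, so `4 ∣ N - 2` and `N ≥ 14`
      rw [mul_one] at hr
      rw [← hr] at hdy
      have := Int.dvd_of_mul_dvd_mul_right hnZ.ne' hdy
      omega
    · nlinarith
  have hcore := core (E := E) (d := d) (x := v * (((a : ℤ) - b) * N)) hE hd (by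
    rw [← hM]
    intro k hk w
    obtain ⟨l, hl⟩ := key (k * v) (hk.mul_left hv) (w + k * c)
    refine ⟨l, ?_⟩
    have e1 : k * (v * (((a : ℤ) - b) * N)) = k * v * (((a : ℤ) - b) * N) := by ring
    have e2 : k * v * (((N : ℤ) - 2) * n) - (w + k * c) * (2 * n * N)
        = k * d - w * (2 * n * N) := by linear_combination k * hc
    rw [e1, ← e2]
    exact hl)
  rw [← hM] at hcore
  -- `2 * n * N ∣ 2 * m * N` is impossible for `0 < m < n`
  have small : ∀ m : ℤ, 0 < m → m < n → ¬ (2 * n * N : ℤ) ∣ v * (2 * m * N) := by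
    intro m hm hmn hdvd
    have := Int.le_of_dvd (by positivity) (hv.symm.dvd_of_dvd_mul_left hdvd)
    nlinarith
  rcases hcore with h0 | h1 | h2
  · have hdvd := hv.symm.dvd_of_dvd_mul_left h0
    have h0' : ((a : ℤ) - b) * N = 0 := by
      apply Int.eq_zero_of_abs_lt_dvd hdvd
      rw [abs_lt]
      constructor <;> nlinarith
    have : (a : ℤ) - b = 0 := by
      rcases mul_eq_zero.mp h0' with h | h
      · exact h
      · omega
    omega
  · exfalso
    refine small b (by omega) (by omega) ?_
    have e : v * (2 * (b : ℤ) * N)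
        = c * (2 * n * N) - (v * (((a : ℤ) - b) * N) - d) := by
      linear_combination v * hsumZ + hc
    rw [e]
    exact dvd_sub (dvd_mul_left _ _) h1
  · exfalso
    refine small a (by omega) (by omega) ?_
    have e : v * (2 * (a : ℤ) * N)
        = c * (2 * n * N) + (v * (((a : ℤ) - b) * N) + d) := by
      linear_combination v * hsumZ + hc
    rw [e]
    exact dvd_add (dvd_mul_left _ _) h2
end

section
/- Let n be a positive integer divisible by 4, let ζ = e^{2πi/n} ∈ ℂ, let k be an integer prime to n, and let φ : ℚ(ζ) → ℂ be a field embedding of the cyclotomic field ℚ(ζ) ⊆ ℂ with φ(ζ) = ζ^k. Then for every integer j not divisible by n, the real number cot(jπ/n) belongs to ℚ(ζ), and φ(cot(jπ/n)) = (−1)^{(k−1)/2}·cot(kjπ/n). -/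
open Real

/-!
With `I = ζ ^ (n / 4)` (this is where `4 ∣ n` enters), the exponential form of the cotangent reads
`cot (m π / n) = (ζ ^ m + 1) / (I * (1 - ζ ^ m))` for every integer `m` (`cot_eq_zeta_ratio`), a
rational expression in `ζ`. An embedding with `ζ ↦ ζ ^ k` sends `ζ ^ j` to `ζ ^ (k * j)` and
`I` to `I ^ k`, and `I ^ k = (-1) ^ ((k - 1) / 2) * I` because `k` is odd (`I_zpow_of_odd`); the
sign is its own inverse, so it may be moved out of the denominator.
-/

/-- The identity also holds when `n ∣ m`: both sides are then `0`, by the convention `x / 0 = 0`. -/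
lemma cot_eq_zeta_ratio (n : ℕ) (ζ : ℂ)
    (hζ : ζ = Complex.exp (2 * (Real.pi : ℂ) * Complex.I / n)) (m : ℤ) :
    ((Real.cot ((m : ℝ) * π / n) : ℝ) : ℂ) = (ζ ^ m + 1) / (Complex.I * (1 - ζ ^ m)) := by
  have h : Complex.exp (2 * Complex.I * ((m : ℂ) * π / n)) = ζ ^ m := by
    rw [hζ, ← Complex.exp_int_mul]
    congr 1
    ring
  rw [Complex.ofReal_cot, Complex.cot_eq_exp_ratio]
  push_cast
  rw [h]

lemma I_eq_zeta_pow (n : ℕ) (hn0 : 0 < n) (hn4 : 4 ∣ n) (ζ : ℂ)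
    (hζ : ζ = Complex.exp (2 * (Real.pi : ℂ) * Complex.I / n)) :
    Complex.I = ζ ^ (n / 4) := by
  obtain ⟨d, rfl⟩ := hn4
  have hd : (d : ℂ) ≠ 0 := by
    have : d ≠ 0 := by omega
    exact_mod_cast this
  rw [Nat.mul_div_cancel_left d (by norm_num), hζ, ← Complex.exp_nat_mul]
  refine Complex.exp_pi_div_two_mul_I.symm.trans (congrArg Complex.exp ?_)
  push_cast
  field_simp
  norm_num

lemma I_zpow_of_odd (k : ℤ) (hk : Odd k) :
    Complex.I ^ k = (-1) ^ ((k - 1) / 2) * Complex.I := by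
  obtain ⟨m, rfl⟩ := hk
  rw [show (2 * m + 1 - 1) / 2 = m by omega, zpow_add₀ Complex.I_ne_zero, zpow_mul, zpow_one]
  norm_num [zpow_ofNat]

/-- Let `4 ∣ n`, `ζ = e^{2πi/n}`, let `k` be an integer prime to `n`, and let
`φ : ℚ(ζ) → ℂ` be a field embedding with `φ(ζ) = ζ^k`. Then for every integer `j` not
divisible by `n`, the real number `cot(jπ/n)` lies in `ℚ(ζ)` and
`φ(cot(jπ/n)) = (-1)^{(k-1)/2}·cot(kjπ/n)`. -/
theorem statement18 (n : ℕ) (hn0 : 0 < n) (hn4 : 4 ∣ n)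
    (ζ : ℂ) (hζ : ζ = Complex.exp (2 * (Real.pi : ℂ) * Complex.I / n))
    (k : ℤ) (hk : Int.gcd k n = 1)
    (φ : ↥(IntermediateField.adjoin ℚ {ζ}) →+* ℂ)
    (hφ : φ ⟨ζ, IntermediateField.mem_adjoin_simple_self ℚ ζ⟩ = ζ ^ k) :
    ∀ j : ℤ, ¬ (n : ℤ) ∣ j →
      ∃ hmem : ((Real.cot ((j : ℝ) * π / n) : ℝ) : ℂ) ∈ IntermediateField.adjoin ℚ {ζ},
        φ ⟨((Real.cot ((j : ℝ) * π / n) : ℝ) : ℂ), hmem⟩ =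
          ((((-1 : ℝ) ^ ((k - 1) / 2 : ℤ)) : ℂ)) *
            ((Real.cot (((k * j : ℤ) : ℝ) * π / n) : ℝ) : ℂ) := by
  intro j _
  have hodd : Odd k := by
    rw [← Int.not_even_iff_odd]
    intro he
    have h2 : (2 : ℤ) ∣ Int.gcd k n :=
      Int.dvd_coe_gcd he.two_dvd (by omega)
    rw [hk] at h2
    omega
  have hI := I_eq_zeta_pow n hn0 hn4 ζ hζ
  -- `z` is `ζ` as an element of `ℚ(ζ)`, and `x` is the cotangent written in terms of `z`.
  set z : ↥(IntermediateField.adjoin ℚ {ζ}) :=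
    ⟨ζ, IntermediateField.mem_adjoin_simple_self ℚ ζ⟩ with hz
  let x : ↥(IntermediateField.adjoin ℚ {ζ}) := (z ^ j + 1) / (z ^ (n / 4) * (1 - z ^ j))
  have hx : (x : ℂ) = ((Real.cot ((j : ℝ) * π / n) : ℝ) : ℂ) := by
    rw [cot_eq_zeta_ratio n ζ hζ, hI]
    have hzj : ((z ^ j : ↥(IntermediateField.adjoin ℚ {ζ})) : ℂ) = ζ ^ j :=
      map_zpow₀ (IntermediateField.adjoin ℚ {ζ}).val z j
    simp only [x, IntermediateField.coe_div, IntermediateField.coe_add, IntermediateField.coe_mul,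
      AddSubgroupClass.coe_sub, IntermediateField.coe_one, IntermediateField.coe_pow, hzj]
    rfl
  refine ⟨hx ▸ x.2, ?_⟩
  have hsub : ∀ hmem, (⟨((Real.cot ((j : ℝ) * π / n) : ℝ) : ℂ), hmem⟩ :
      ↥(IntermediateField.adjoin ℚ {ζ})) = x := fun _ => Subtype.ext hx.symm
  have hφI : φ z ^ (n / 4) = (-1) ^ ((k - 1) / 2) * Complex.I := by
    rw [hφ, ← I_zpow_of_odd k hodd, hI, ← zpow_natCast, ← zpow_natCast, ← zpow_mul, ← zpow_mul,
      mul_comm]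
  have hsign : (((-1 : ℂ) ^ ((k - 1) / 2))⁻¹) = (-1) ^ ((k - 1) / 2) := by
    rw [← inv_zpow]
    norm_num
  rw [hsub, cot_eq_zeta_ratio n ζ hζ]
  simp only [x, map_div₀, map_add, map_mul, map_sub, map_one, map_pow, map_zpow₀, hφI]
  rw [hφ, ← zpow_mul, mul_assoc, div_mul_eq_div_div_swap, div_eq_mul_inv _ ((-1 : ℂ) ^ _), hsign]
  push_cast
  ring
end

section
/- For every integer N ≥ 9 there exists an integer k with gcd(k, 6N) = 1 and {k/N} < 1/2 such that {2k/(3N)} > 2/3 and {k/2 + k/(3N)} > 5/6; consequently, setting n = 6N, a = 3N−6, b = 4, c = 3N+2 (so that (a/n)π = ((1/2) − (1/N))π, (b/n)π = (2/(3N))π, (c/n)π = ((1/2) + (1/(3N)))π), the identity {ka/n} + {kb/n} + {kc/n} = 1 fails for this k. (Explicitly, one may take k = N+1 if N ≡ 0 or 4 (mod 6), k = N+2 if N ≡ 3 or 5 (mod 6), k = N+3 if N ≡ 2 (mod 6), and k = N+4 if N ≡ 1 (mod 6).) -/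
/-!
Take `k = N + j` with `1 ≤ j ≤ 4` chosen, according to `N` modulo `6`, so that `k` is coprime to
`6N` (`exists_shift`). As `k` is
odd and `0 < 2 * j < N`, the fractional parts of `k/N`, `2k/(3N)` and `k/2 + k/(3N)` are exactly
`j/N`, `2/3 + 2j/(3N)` and `5/6 + j/(3N)`. The last two are the second and third summands of the
final identity, so that sum is at least `2/3 + 5/6 > 1`.
-/

open Real

/-- Every `N` has a shift `j` between `1` and `4` with `N + j` coprime to both `6` and `N`;
coprimality to `N` is expressed as coprimality of `j` and `N`. -/
lemma exists_shift (N : ℕ) :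
    ∃ j : ℕ, 1 ≤ j ∧ j ≤ 4 ∧ Nat.Coprime (N + j) 6 ∧ Nat.Coprime j N := by
  have key : ∀ j, Nat.Coprime ((N + j) % 6) 6 → Nat.Coprime (N + j) 6 := by
    intro j h
    rwa [Nat.coprime_comm, Nat.Coprime, Nat.gcd_rec]
  have two : N % 2 = 1 → Nat.Coprime 2 N := fun h =>
    (Nat.Prime.coprime_iff_not_dvd Nat.prime_two).2 (by omega)
  have hr : N % 6 < 6 := Nat.mod_lt _ (by norm_num)
  have mod_of : ∀ j, (N + j) % 6 = 1 ∨ (N + j) % 6 = 5 → Nat.Coprime (N + j) 6 := by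
    rintro j (h | h) <;> exact key j (by rw [h]; norm_num)
  rcases (by omega : (N % 6 = 0 ∨ N % 6 = 4) ∨ (N % 6 = 3 ∨ N % 6 = 5) ∨ N % 6 = 2 ∨ N % 6 = 1)
    with h | h | h | h
  · exact ⟨1, by norm_num, by norm_num, mod_of 1 (by omega), Nat.coprime_one_left N⟩
  · exact ⟨2, by norm_num, by norm_num, mod_of 2 (by omega), two (by omega)⟩
  · exact ⟨3, by norm_num, by norm_num, mod_of 3 (by omega),
      (Nat.Prime.coprime_iff_not_dvd Nat.prime_three).2 (by omega)⟩
  · exact ⟨4, by norm_num, by norm_num, mod_of 4 (by omega),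
      Nat.Coprime.pow_left 2 (two (by omega))⟩

/-- For every integer `N ≥ 9` there is an integer `k` with `gcd(k, 6N) = 1` and
`{k/N} < 1/2` such that `{2k/(3N)} > 2/3` and `{k/2 + k/(3N)} > 5/6`; consequently,
with `n = 6N`, `a = 3N - 6`, `b = 4`, `c = 3N + 2`, the identity
`{ka/n} + {kb/n} + {kc/n} = 1` fails for this `k`. -/
theorem statement19 (N : ℕ) (hN : 9 ≤ N) :
    ∃ k : ℤ, Int.gcd k (6 * N) = 1 ∧ Int.fract ((k : ℝ) / N) < 1 / 2 ∧
      2 / 3 < Int.fract (2 * (k : ℝ) / (3 * N)) ∧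
      5 / 6 < Int.fract ((k : ℝ) / 2 + (k : ℝ) / (3 * N)) ∧
      Int.fract ((k : ℝ) * (3 * (N : ℝ) - 6) / (6 * N)) +
        Int.fract ((k : ℝ) * 4 / (6 * N)) +
        Int.fract ((k : ℝ) * (3 * (N : ℝ) + 2) / (6 * N)) ≠ 1 := by
  obtain ⟨j, hj1, hj4, h6, hjN⟩ := exists_shift N
  have hgcd : Nat.Coprime (N + j) (6 * N) :=
    h6.mul_right (by rwa [Nat.coprime_self_add_left])
  -- Coprimality to `6` makes `k = N + j` odd: `k = 2 * m + 1`.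
  obtain ⟨m, hm⟩ : Odd (N + j) :=
    Nat.coprime_two_right.1 (h6.coprime_dvd_right (by norm_num))
  have hNR : (9 : ℝ) ≤ N := by exact_mod_cast hN
  have hN0 : (0 : ℝ) < N := by linarith
  have hj1R : (1 : ℝ) ≤ j := by exact_mod_cast hj1
  have hj4R : (j : ℝ) ≤ 4 := by exact_mod_cast hj4
  have hmR : (N : ℝ) + j = 2 * m + 1 := by exact_mod_cast hm
  have hk : (((N + j : ℕ) : ℤ) : ℝ) = N + j := by push_cast; ring
  have hpos : 0 < (j : ℝ) / N := by positivity
  have hlt : (j : ℝ) / N < 1 / 2 := by rw [div_lt_iff₀ hN0]; linarith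
  have f1 : Int.fract (((N : ℝ) + j) / N) = j / N := by
    rw [Int.fract_eq_iff]
    refine ⟨hpos.le, by linarith, 1, ?_⟩
    push_cast; field_simp; ring
  have f2 : Int.fract (2 * ((N : ℝ) + j) / (3 * N)) = 2 / 3 + 2 / 3 * (j / N) := by
    rw [Int.fract_eq_iff]
    refine ⟨by linarith, by linarith, 0, ?_⟩
    push_cast; field_simp; ring
  have f3 : Int.fract (((N : ℝ) + j) / 2 + ((N : ℝ) + j) / (3 * N)) = 5 / 6 + 1 / 3 * (j / N) := by
    rw [Int.fract_eq_iff]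
    refine ⟨by linarith, by linarith, m, ?_⟩
    have e : ((N : ℝ) + j) / (3 * N) = 1 / 3 + 1 / 3 * (j / N) := by field_simp
    rw [e, hmR]; push_cast; ring
  have e2 : ((N : ℝ) + j) * 4 / (6 * N) = 2 * ((N : ℝ) + j) / (3 * N) := by field_simp; ring
  have e3 : ((N : ℝ) + j) * (3 * (N : ℝ) + 2) / (6 * N)
      = ((N : ℝ) + j) / 2 + ((N : ℝ) + j) / (3 * N) := by field_simp; ring
  refine ⟨((N + j : ℕ) : ℤ), by exact_mod_cast hgcd, ?_⟩
  rw [hk, e2, e3, f1, f2, f3]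
  refine ⟨hlt, by linarith, by linarith, ?_⟩
  have h0 := Int.fract_nonneg (((N : ℝ) + j) * (3 * (N : ℝ) - 6) / (6 * N))
  exact ne_of_gt (by linarith)
end
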